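/- arXiv:1712.09483 — 2 statements merged into one kernel-verified Lean document; each statement's English description precedes it below -/
import Mathlib

section
/- Let η > 1 and let A be a real p×p matrix such that η⁻¹ ≤ ‖A e_i‖₂ ≤ η for every standard basis vector e_i (i = 1, ..., p). Let w₁, ..., w_p be nonnegative reals, W = diag(w₁, ..., w_p), and W_η = diag(clip_η(w₁), ..., clip_η(w_p)). Then ‖W − W_η‖₂ ≤ ‖A − W‖₂. -/
/-!
The matrix `W - W_η` is diagonal, so its operator norm is the largest `|w i - clip η (w i)|`.
Since `clip η t` is the point of `[η⁻¹, η]` closest to `t`, and `‖A eᵢ‖` lies in that interval,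
`|w i - clip η (w i)| ≤ |‖A eᵢ‖ - w i| = |‖A eᵢ‖ - ‖W eᵢ‖| ≤ ‖(A - W) eᵢ‖ ≤ ‖A - W‖`,
where `‖W eᵢ‖ = w i` uses `0 ≤ w i`.
-/

open scoped BigOperators
open Matrix

/-- The `ℓ₂ → ℓ₂` operator norm of a real square matrix. -/
noncomputable def opNorm {p : ℕ} (M : Matrix (Fin p) (Fin p) ℝ) : ℝ :=
  ‖LinearMap.toContinuousLinearMap (Matrix.toEuclideanLin M)‖

/-- Clipping a real number to the interval `[η⁻¹, η]`. -/
noncomputable def clip (η t : ℝ) : ℝ := min (max t η⁻¹) η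

/-- `clip η t` is a nearest point to `t` in `[η⁻¹, η]`. -/
lemma abs_sub_clip_le {η t a : ℝ} (h₁ : η⁻¹ ≤ a) (h₂ : a ≤ η) :
    |t - clip η t| ≤ |a - t| := by
  unfold clip
  grind

open scoped Matrix.Norms.L2Operator in
lemma opNorm_diagonal_le {p : ℕ} (d : Fin p → ℝ) {C : ℝ} (hC : 0 ≤ C)
    (h : ∀ i, |d i| ≤ C) : opNorm (Matrix.diagonal d) ≤ C := by
  have h1 : opNorm (Matrix.diagonal d) = ‖d‖ := Matrix.l2_opNorm_diagonal d
  rw [h1]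
  exact (pi_norm_le_iff_of_nonneg hC).2 h

theorem stmt1 {p : ℕ} (η : ℝ) (hη : 1 < η)
    (A : Matrix (Fin p) (Fin p) ℝ)
    (hA : ∀ i : Fin p,
      η⁻¹ ≤ Real.sqrt (∑ j, (A j i) ^ 2) ∧ Real.sqrt (∑ j, (A j i) ^ 2) ≤ η)
    (w : Fin p → ℝ) (hw : ∀ i, 0 ≤ w i) :
    opNorm (Matrix.diagonal w - Matrix.diagonal fun i => clip η (w i)) ≤
      opNorm (A - Matrix.diagonal w) := by
  rw [Matrix.diagonal_sub]
  refine opNorm_diagonal_le _ (norm_nonneg _) fun i => ?_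
  refine (abs_sub_clip_le (hA i).1 (hA i).2).trans ?_
  have hcol : Real.sqrt (∑ j, (A j i) ^ 2)
      = ‖Matrix.toEuclideanLin A (EuclideanSpace.single i 1)‖ := by
    simp [EuclideanSpace.norm_eq, Matrix.toLpLin_apply]
  have hdiag : w i
      = ‖Matrix.toEuclideanLin (Matrix.diagonal w) (EuclideanSpace.single i 1)‖ := by
    have : Matrix.toEuclideanLin (Matrix.diagonal w) (EuclideanSpace.single i 1)
        = EuclideanSpace.single i (w i) := by
      ext j
      simp [Matrix.toLpLin_apply]
    rw [this, EuclideanSpace.norm_single, Real.norm_of_nonneg (hw i)]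
  have hop := (LinearMap.toContinuousLinearMap
    (Matrix.toEuclideanLin (A - Matrix.diagonal w))).le_opNorm (EuclideanSpace.single i 1)
  rw [EuclideanSpace.norm_single, norm_one, mul_one, LinearMap.coe_toContinuousLinearMap',
    map_sub, LinearMap.sub_apply] at hop
  calc |Real.sqrt (∑ j, (A j i) ^ 2) - w i|
      = |‖Matrix.toEuclideanLin A (EuclideanSpace.single i 1)‖
          - ‖Matrix.toEuclideanLin (Matrix.diagonal w) (EuclideanSpace.single i 1)‖| := by
        rw [← hcol, ← hdiag]
    _ ≤ _ := abs_norm_sub_norm_le _ _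
    _ ≤ opNorm (A - Matrix.diagonal w) := by
        rw [opNorm, map_sub]
        exact hop
end

section
/- Let n, k, S be positive integers, p = 2kS, and τ > 0. Let θ = (θ(1), ..., θ(S)) where each θ(s) ∈ {0,1}^{k×k}. Define the real p×p matrix C(θ) by C(θ)_{2k(s−1)+k+i, 2k(s−1)+j} = τ n^{−1/2} θ(s)_{ij} for s ∈ {1, ..., S} and i, j ∈ {1, ..., k}, with all other entries 0, and set Ω(θ) = (I − C(θ))ᵀ (I − C(θ)). Then for all such θ, θ′, ‖Ω(θ) − Ω(θ′)‖_F² ≥ H(θ, θ′) · τ² / n, where H(θ, θ′) = Σ_{s=1}^S Σ_{i,j=1}^k |θ(s)_{ij} − θ′(s)_{ij}|. -/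
/-!
Call an index of block `s` a top index if its offset in the block is below `k`, and a bottom index
otherwise. The nonzero entries of `C` have a bottom row and a top column of the same block, so `C`
has zero columns at the bottom indices. Hence, for a bottom index `r` and a top index `c`,
column `r` of `1 - C` is a unit vector and `((1 - C)ᵀ (1 - C)) r c = (1 - C) r c = - C r c`
(`gram_apply_of_col_eq_zero`). At the position belonging to `(s, i, j)` the difference of the two
Gram matrices is therefore `τ n^{-1/2} (θ' s i j - θ s i j)`, whose square is
`τ² / n * |θ s i j - θ' s i j|` because the values are in `{0, 1}`. These positions are distinct, so
discarding all the other squared entries yields the bound.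
-/

open scoped BigOperators
open Matrix

/-- The Frobenius norm of a real square matrix. -/
noncomputable def frobNorm {p : ℕ} (M : Matrix (Fin p) (Fin p) ℝ) : ℝ :=
  Real.sqrt (∑ i, ∑ j, (M i j) ^ 2)

lemma block_offset_unique {m s t x y : ℕ} (hx : x < m) (hy : y < m)
    (h : m * s + x = m * t + y) : s = t ∧ x = y := by
  have hm : 0 < m := by omega
  have h1 : (m * s + x) / m = s := by
    rw [Nat.mul_add_div hm, Nat.div_eq_of_lt hx, add_zero]
  have h2 : (m * t + y) / m = t := by
    rw [Nat.mul_add_div hm, Nat.div_eq_of_lt hy, add_zero]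
  have hst : s = t := by rw [← h1, ← h2, h]
  subst hst
  exact ⟨rfl, by omega⟩

lemma block_index_lt {k S s x : ℕ} (hs : s < S) (hx : x < 2 * k) :
    2 * k * s + x < 2 * k * S := by
  have h := Nat.mul_le_mul_left (2 * k) (Nat.succ_le_of_lt hs)
  rw [Nat.mul_succ] at h
  omega

/-- The row index of the entry of `C` that carries `θ s i j`. -/
def bottomIndex {k S : ℕ} (s : Fin S) (i : Fin k) : Fin (2 * k * S) :=
  ⟨2 * k * s + (k + i), block_index_lt s.2 (by omega)⟩

/-- The column index of the entry of `C` that carries `θ s i j`. -/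
def topIndex {k S : ℕ} (s : Fin S) (j : Fin k) : Fin (2 * k * S) :=
  ⟨2 * k * s + j, block_index_lt s.2 (by omega)⟩

lemma bottomIndex_inj {k S : ℕ} {s t : Fin S} {i j : Fin k}
    (h : bottomIndex s i = bottomIndex t j) : s = t ∧ i = j := by
  have := block_offset_unique (by omega) (by omega) (Fin.val_eq_of_eq h)
  exact ⟨Fin.ext this.1, Fin.ext (by omega)⟩

lemma topIndex_inj {k S : ℕ} {s t : Fin S} {i j : Fin k}
    (h : topIndex s i = topIndex t j) : s = t ∧ i = j := by
  have := block_offset_unique (by omega) (by omega) (Fin.val_eq_of_eq h)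
  exact ⟨Fin.ext this.1, Fin.ext (by omega)⟩

lemma bottomIndex_ne_topIndex {k S : ℕ} (s t : Fin S) (i j : Fin k) :
    bottomIndex s i ≠ topIndex t j := by
  intro h
  have := block_offset_unique (by omega) (by omega) (Fin.val_eq_of_eq h)
  omega

lemma gram_apply_of_col_eq_zero {p : ℕ} (C : Matrix (Fin p) (Fin p) ℝ) (r c : Fin p)
    (hr : ∀ q, C q r = 0) (hrc : r ≠ c) :
    ((1 - C)ᵀ * (1 - C) : Matrix (Fin p) (Fin p) ℝ) r c = - C r c := by
  simp [Matrix.mul_apply, Matrix.sub_apply, hr, Matrix.one_apply, hrc]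

lemma sum_comp_le_of_injective {α β : Type*} [Fintype α] [Fintype β] {e : α → β}
    (he : Function.Injective e) (f : β → ℝ) (hf : ∀ y, 0 ≤ f y) : ∑ x, f (e x) ≤ ∑ y, f y := by
  calc ∑ x, f (e x) = ∑ y ∈ Finset.univ.map ⟨e, he⟩, f y := by simp
    _ ≤ ∑ y, f y :=
        Finset.sum_le_sum_of_subset_of_nonneg (Finset.subset_univ _) fun y _ _ => hf y

/-- The entry of the Gram matrix at the position carrying `θ s i j`. -/
lemma gram_apply {k S : ℕ} (a : ℝ) (θ : Fin S → Fin k → Fin k → ℝ)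
    (C : Matrix (Fin (2 * k * S)) (Fin (2 * k * S)) ℝ)
    (hC : ∀ r c : Fin (2 * k * S), C r c =
      ∑ s : Fin S, ∑ i : Fin k, ∑ j : Fin k,
        if (r : ℕ) = 2 * k * (s : ℕ) + k + (i : ℕ) ∧ (c : ℕ) = 2 * k * (s : ℕ) + (j : ℕ)
          then a * θ s i j else 0) (s : Fin S) (i j : Fin k) :
    ((1 - C)ᵀ * (1 - C) : Matrix (Fin (2 * k * S)) (Fin (2 * k * S)) ℝ)
      (bottomIndex s i) (topIndex s j) = - (a * θ s i j) := by
  have hC2 : ∀ r c : Fin (2 * k * S), C r c =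
      ∑ s : Fin S, ∑ i : Fin k, ∑ j : Fin k,
        if r = bottomIndex s i ∧ c = topIndex s j then a * θ s i j else 0 := by
    intro r c
    rw [hC]
    simp only [Fin.ext_iff, bottomIndex, topIndex, add_assoc]
  rw [gram_apply_of_col_eq_zero _ _ _ _ (bottomIndex_ne_topIndex s s i j), hC2]
  · congr 1
    rw [Finset.sum_eq_single s, Finset.sum_eq_single i, Finset.sum_eq_single j]
    · simp
    · intro b _ hb
      exact if_neg fun h => hb (topIndex_inj h.2).2.symm
    · simp
    · intro b _ hb
      exact Finset.sum_eq_zero fun _ _ => if_neg fun h => hb (bottomIndex_inj h.1).2.symm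
    · simp
    · intro b _ hb
      exact Finset.sum_eq_zero fun _ _ => Finset.sum_eq_zero fun _ _ =>
        if_neg fun h => hb (bottomIndex_inj h.1).1.symm
    · simp
  · intro q
    rw [hC2]
    exact Finset.sum_eq_zero fun t _ => Finset.sum_eq_zero fun _ _ =>
      Finset.sum_eq_zero fun l _ => if_neg fun h => bottomIndex_ne_topIndex s t i l h.2

theorem stmt17 (n k S : ℕ) (hn : 0 < n) (hk : 0 < k) (hS : 0 < S)
    (τ : ℝ) (hτ : 0 < τ)
    (θ θ' : Fin S → Fin k → Fin k → ℝ)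
    (hθ : ∀ s i j, θ s i j = 0 ∨ θ s i j = 1)
    (hθ' : ∀ s i j, θ' s i j = 0 ∨ θ' s i j = 1)
    (C C' : Matrix (Fin (2 * k * S)) (Fin (2 * k * S)) ℝ)
    (hC : ∀ r c : Fin (2 * k * S), C r c =
      ∑ s : Fin S, ∑ i : Fin k, ∑ j : Fin k,
        if (r : ℕ) = 2 * k * (s : ℕ) + k + (i : ℕ) ∧ (c : ℕ) = 2 * k * (s : ℕ) + (j : ℕ)
          then τ * (n : ℝ) ^ (-(1 : ℝ) / 2) * θ s i j else 0)
    (hC' : ∀ r c : Fin (2 * k * S), C' r c =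
      ∑ s : Fin S, ∑ i : Fin k, ∑ j : Fin k,
        if (r : ℕ) = 2 * k * (s : ℕ) + k + (i : ℕ) ∧ (c : ℕ) = 2 * k * (s : ℕ) + (j : ℕ)
          then τ * (n : ℝ) ^ (-(1 : ℝ) / 2) * θ' s i j else 0) :
    (∑ s, ∑ i, ∑ j, |θ s i j - θ' s i j|) * τ ^ 2 / (n : ℝ) ≤
      frobNorm ((1 - C)ᵀ * (1 - C) - (1 - C')ᵀ * (1 - C')) ^ 2 := by
  have hn' : (0 : ℝ) < n := by exact_mod_cast hn
  have ha : (τ * (n : ℝ) ^ (-(1 : ℝ) / 2)) ^ 2 = τ ^ 2 / n := by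
    rw [mul_pow, ← Real.rpow_natCast ((n : ℝ) ^ (-(1 : ℝ) / 2)), ← Real.rpow_mul hn'.le]
    norm_num [Real.rpow_neg_one, div_eq_mul_inv]
  have hG := gram_apply (τ * (n : ℝ) ^ (-(1 : ℝ) / 2)) θ C hC
  have hG' := gram_apply (τ * (n : ℝ) ^ (-(1 : ℝ) / 2)) θ' C' hC'
  clear hC hC'
  generalize τ * (n : ℝ) ^ (-(1 : ℝ) / 2) = a at ha hG hG'
  obtain ⟨M, hM⟩ : ∃ M, M = (1 - C)ᵀ * (1 - C) - (1 - C')ᵀ * (1 - C') := ⟨_, rfl⟩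
  rw [← hM]
  have hterm : ∀ s i j, |θ s i j - θ' s i j| * (τ ^ 2 / n) =
      (M (bottomIndex s i) (topIndex s j)) ^ 2 := by
    intro s i j
    rw [hM, Matrix.sub_apply, hG, hG', ← ha]
    rcases hθ s i j with h | h <;> rcases hθ' s i j with h' | h' <;> simp [h, h']
  let e : Fin S × Fin k × Fin k → Fin (2 * k * S) × Fin (2 * k * S) :=
    fun x => (bottomIndex x.1 x.2.1, topIndex x.1 x.2.2)
  have he : Function.Injective e := by
    rintro ⟨s, i, j⟩ ⟨t, i', j'⟩ h
    obtain ⟨h1, h2⟩ := Prod.mk.inj h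
    obtain ⟨rfl, rfl⟩ := bottomIndex_inj h1
    obtain ⟨-, rfl⟩ := topIndex_inj h2
    rfl
  rw [frobNorm, Real.sq_sqrt (by positivity), mul_div_assoc]
  have hsum := sum_comp_le_of_injective he (fun y => (M y.1 y.2) ^ 2) fun _ => sq_nonneg _
  rw [Fintype.sum_prod_type, Fintype.sum_prod_type] at hsum
  simp only [Fintype.sum_prod_type] at hsum
  simpa only [Finset.sum_mul, hterm] using hsum
end
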